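/- (Deligne's formality criterion.) Let E be a differential graded algebra over a field equipped with an additional ℤ-grading E^i = ⊕_{j∈ℤ} E^{i,j} which is respected by the differential and multiplication. If for each i the cohomology H^i(E) is concentrated in additional-grading degree i (i.e. H^i(E) = H^i(E)^{i}), then E is formal: E is quasi-isomorphic, as a dg-algebra, to its cohomology H^*(E) regarded as a dg-algebra with trivial differential. -/

import Mathlib

/-!
STATEMENT 17 (Deligne's formality criterion).

Let `E` be a differential graded algebra over a field `k`, equipped with an additional
`ℤ`-grading `E^i = ⊕_j E^{i,j}` respected by the differential and the multiplication.  If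
for each `i` the cohomology `H^i(E)` is concentrated in additional-grading degree `i`, then
`E` is formal: quasi-isomorphic, as a dg-algebra, to its cohomology `H^*(E)` with trivial
differential.

Modelling:

* a dg-algebra over `k` is a `k`-algebra `E` with a `ℤ`-grading by `k`-submodules making it
  a graded algebra, and a `k`-linear differential `d` of degree `+1` with `d² = 0` and the
  Leibniz rule `d(xy) = d(x)y + (−1)^i x d(y)` for `x ∈ E^i` (structure `DGA`);
* a morphism of dg-algebras is a `k`-algebra homomorphism preserving the grading and
  commuting with the differentials (structure `DGAHom`); it is a quasi-isomorphism when it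
  induces a bijection on cohomology `ker d / im d` (`IsQuasiIso`, stated without quotients);
* `E` is *formal* iff it is connected to a dg-algebra with zero differential by a zigzag of
  quasi-isomorphisms (`Formal`); a dg-algebra with zero differential quasi-isomorphic to `E`
  is automatically isomorphic to the cohomology algebra `H^*(E)` with trivial differential,
  so this is equivalent to the usual definition of formality;
* the additional grading is a second algebra grading `aux` such that each `E^i` is the sum
  of the pieces `E^{i,j} = E^i ⊓ aux j`, with `d(E^{i,j}) ⊆ E^{i+1,j}`;
* "`H^i(E)` is concentrated in additional degree `i`" is rendered as: for `j ≠ i`, every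
  cocycle in `E^{i,j}` is a coboundary.
-/

/-- A differential graded algebra over the field `k`. -/
structure DGA (k : Type) [Field k] where
  /-- the underlying type -/
  carrier : Type
  [ring : Ring carrier]
  [alg : Algebra k carrier]
  /-- the grading `E = ⊕ᵢ Eⁱ` -/
  grading : ℤ → Submodule k carrier
  [graded : GradedAlgebra grading]
  /-- the differential -/
  d : carrier →ₗ[k] carrier
  d_degree : ∀ i : ℤ, ∀ x ∈ grading i, d x ∈ grading (i + 1)
  d_squared : ∀ x, d (d x) = 0
  leibniz : ∀ (i : ℤ) (x y : carrier), x ∈ grading i →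
    d (x * y) = d x * y + ((-1 : k) ^ i) • (x * d y)

attribute [instance] DGA.ring DGA.alg DGA.graded

/-- A morphism of differential graded algebras over `k`. -/
structure DGAHom {k : Type} [Field k] (E F : DGA k) where
  /-- the underlying algebra homomorphism -/
  toAlgHom : E.carrier →ₐ[k] F.carrier
  map_grading : ∀ (i : ℤ), ∀ x ∈ E.grading i, toAlgHom x ∈ F.grading i
  comm_d : ∀ x, toAlgHom (E.d x) = F.d (toAlgHom x)

/-- A morphism of dg-algebras is a quasi-isomorphism if it induces a bijection on
cohomology `ker d / im d` (surjectivity and injectivity modulo coboundaries). -/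
def DGAHom.IsQuasiIso {k : Type} [Field k] {E F : DGA k} (f : DGAHom E F) : Prop :=
  (∀ y : F.carrier, F.d y = 0 → ∃ x : E.carrier, E.d x = 0 ∧
    ∃ z : F.carrier, y = f.toAlgHom x + F.d z) ∧
  (∀ x : E.carrier, E.d x = 0 → (∃ z : F.carrier, f.toAlgHom x = F.d z) →
    ∃ w : E.carrier, x = E.d w)

/-- Two dg-algebras are related by `QIso` if there is a quasi-isomorphism from one to the
other. -/
def QIso {k : Type} [Field k] (E F : DGA k) : Prop :=
  ∃ f : DGAHom E F, f.IsQuasiIso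

/-- `E` is formal: it is connected by a zigzag of quasi-isomorphisms to a dg-algebra with
zero differential (necessarily isomorphic to its cohomology `H^*(E)` with trivial
differential). -/
def DGA.Formal {k : Type} [Field k] (E : DGA k) : Prop :=
  ∃ Z : DGA k, Z.d = 0 ∧ Relation.EqvGen QIso E Z

/-!
Give `E^{i,j}` the weight `j - i`. The differential lowers the weight by one, and the hypothesis
says that the cohomology of `E` lives in weight zero. Let `F ⊆ E` consist of the elements of
nonnegative weight whose weight-zero component is a cocycle. The complex `E / F` is acyclic, so
`F → E` is a quasi-isomorphism. The elements of `F` whose weight-zero component is a coboundary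
form an acyclic two-sided ideal `I ⊇ d F`, so `F → F / I` is a quasi-isomorphism onto a dg-algebra
with zero differential.
-/

open DirectSum

section Decomposition

variable {ι R M N : Type*} [DecidableEq ι] [Ring R]
  [AddCommGroup M] [Module R M] [AddCommGroup N] [Module R N]
  (ℳ : ι → Submodule R M) [Decomposition ℳ]

lemma mem_of_forall_decompose_mem {p : Submodule R M} {x : M}
    (h : ∀ i, (decompose ℳ x i : M) ∈ p) : x ∈ p := by
  classical
  rw [← sum_support_decompose ℳ x]
  exact p.sum_mem fun i _ ↦ h i

lemma isHomogeneous_span {s : Set M} (hs : ∀ x ∈ s, SetLike.IsHomogeneousElem ℳ x) :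
    SetLike.IsHomogeneous ℳ (Submodule.span R s) := by
  intro i x hx
  induction hx using Submodule.span_induction with
  | mem x hxs =>
    obtain ⟨j, hxj⟩ := hs x hxs
    obtain rfl | hji := eq_or_ne j i
    · rw [decompose_of_mem_same ℳ hxj]
      exact Submodule.subset_span hxs
    · rw [decompose_of_mem_ne ℳ hxj hji]
      exact zero_mem _
  | zero => simp
  | add x y _ _ hx hy => simpa using add_mem hx hy
  | smul c x _ hx => simpa [decompose_smul, DirectSum.smul_apply] using Submodule.smul_mem _ c hx

lemma coe_decompose_apply_of_mapsTo {κ : Type*} [DecidableEq κ] (𝒩 : κ → Submodule R N)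
    [Decomposition 𝒩] {f : M →ₗ[R] N} {φ : ι → κ} (hφ : φ.Injective)
    (hf : ∀ i, ∀ x ∈ ℳ i, f x ∈ 𝒩 (φ i)) (x : M) (i : ι) :
    (decompose 𝒩 (f x) (φ i) : N) = f (decompose ℳ x i) := by
  induction x using Decomposition.inductionOn ℳ with
  | zero => simp
  | add x y hx hy => simp [hx, hy]
  | @homogeneous j x =>
    obtain rfl | hji := eq_or_ne j i
    · rw [decompose_of_mem_same 𝒩 (hf j x x.2), decompose_of_mem_same ℳ x.2]
    · rw [decompose_of_mem_ne 𝒩 (hf j x x.2) (hφ.ne hji), decompose_of_mem_ne ℳ x.2 hji, map_zero]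

lemma isInternal_comap_of_injective {f : N →ₗ[R] M} (hf : Function.Injective f)
    (hrange : SetLike.IsHomogeneous ℳ (LinearMap.range f)) :
    IsInternal fun i ↦ (ℳ i).comap f := by
  refine isInternal_submodule_of_iSupIndep_of_iSup_eq_top (fun i ↦ ?_)
    (eq_top_iff.mpr fun x _ ↦ ?_)
  · have hle : ⨆ j, ⨆ (_ : j ≠ i), (ℳ j).comap f ≤ (⨆ j, ⨆ (_ : j ≠ i), ℳ j).comap f :=
      iSup₂_le fun j hj ↦ Submodule.comap_mono (le_iSup₂_of_le j hj le_rfl)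
    refine Submodule.disjoint_def.mpr fun x hx hx' ↦ hf ?_
    rw [map_zero]
    exact Submodule.disjoint_def.mp ((Decomposition.isInternal ℳ).submodule_iSupIndep i) _ hx
      (hle hx')
  · suffices f x ∈ (⨆ i, (ℳ i).comap f).map f by
      obtain ⟨y, hy, hyx⟩ := this
      exact hf hyx ▸ hy
    refine mem_of_forall_decompose_mem ℳ fun i ↦ ?_
    obtain ⟨y, hy⟩ := hrange i (LinearMap.mem_range_self f x)
    refine ⟨y, Submodule.mem_iSup_of_mem i ?_, hy⟩
    rw [Submodule.mem_comap, hy]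
    exact SetLike.coe_mem _

lemma decompose_eq_zero_of_mem_iSup_ne {i : ι} {x : M} (hx : x ∈ ⨆ j, ⨆ (_ : j ≠ i), ℳ j) :
    decompose ℳ x i = 0 := by
  induction hx using Submodule.iSup_induction' with
  | zero => simp
  | add x y _ _ hx hy => simp [hx, hy]
  | mem j x hx =>
    by_cases hj : j = i
    · simp_all
    · rw [iSup_pos hj] at hx
      exact Subtype.ext (decompose_of_mem_ne ℳ hx hj)

lemma isInternal_map_of_surjective {f : M →ₗ[R] N} (hf : Function.Surjective f)
    (hker : SetLike.IsHomogeneous ℳ (LinearMap.ker f)) :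
    IsInternal fun i ↦ (ℳ i).map f := by
  refine isInternal_submodule_of_iSupIndep_of_iSup_eq_top (fun i ↦ ?_) ?_
  · simp only [← Submodule.map_iSup]
    refine Submodule.disjoint_def.mpr ?_
    rintro _ ⟨x, hx, rfl⟩ ⟨y, hy, hyx⟩
    have hxy : x - y ∈ LinearMap.ker f := by rw [LinearMap.mem_ker, map_sub, hyx, sub_self]
    have := hker i hxy
    rwa [decompose_sub, DirectSum.sub_apply, decompose_eq_zero_of_mem_iSup_ne ℳ hy, sub_zero,
      decompose_of_mem_same ℳ hx] at this
  · rw [← Submodule.map_iSup, (Decomposition.isInternal ℳ).submodule_iSup_eq_top,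
      Submodule.map_top, LinearMap.range_eq_top.mpr hf]

lemma isInternal_inf {κ : Type*} [DecidableEq κ] (𝒩 : κ → Submodule R M) [Decomposition 𝒩]
    (h : ∀ i, ℳ i ≤ ⨆ j, ℳ i ⊓ 𝒩 j) : IsInternal fun p : ι × κ ↦ ℳ p.1 ⊓ 𝒩 p.2 := by
  refine isInternal_submodule_of_iSupIndep_of_iSup_eq_top (fun p ↦ ?_) ?_
  · refine Submodule.disjoint_def.mpr fun x hx hx' ↦ ?_
    suffices decompose 𝒩 (decompose ℳ x p.1 : M) p.2 = 0 by
      rwa [decompose_of_mem_same ℳ hx.1, ← ZeroMemClass.coe_eq_zero,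
        decompose_of_mem_same 𝒩 hx.2] at this
    clear hx
    induction hx' using Submodule.iSup_induction' with
    | zero => simp
    | add x y _ _ hx hy => simp [hx, hy]
    | mem q x hx =>
      by_cases hqp : q = p
      · simp_all
      rw [iSup_pos hqp] at hx
      by_cases h₁ : q.1 = p.1
      · have h₂ : q.2 ≠ p.2 := fun h₂ ↦ hqp (Prod.ext h₁ h₂)
        rw [← h₁, decompose_of_mem_same ℳ hx.1]
        exact Subtype.ext (decompose_of_mem_ne 𝒩 hx.2 h₂)
      · rw [decompose_of_mem_ne ℳ hx.1 h₁, decompose_zero, DirectSum.zero_apply]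
  · rw [iSup_prod, eq_top_iff, ← (Decomposition.isInternal ℳ).submodule_iSup_eq_top]
    exact iSup_mono h

end Decomposition

section GradedAlgebra

variable {ι R A B : Type*} [DecidableEq ι] [AddMonoid ι] [CommRing R]
  [Ring A] [Algebra R A] [Ring B] [Algebra R B] (𝒜 : ι → Submodule R A) [GradedAlgebra 𝒜]

/-- The grading pulled back along an injective algebra homomorphism with homogeneous range. -/
noncomputable abbrev gradedAlgebraComap (f : B →ₐ[R] A) (hf : Function.Injective f)
    (hrange : SetLike.IsHomogeneous 𝒜 (LinearMap.range f.toLinearMap)) :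
    GradedAlgebra fun i ↦ (𝒜 i).comap f.toLinearMap :=
  have : SetLike.GradedMonoid fun i ↦ (𝒜 i).comap f.toLinearMap :=
    { one_mem := by simpa using SetLike.GradedOne.one_mem
      mul_mem := fun _ _ x y hx hy ↦ by simpa using SetLike.mul_mem_graded (A := 𝒜) hx hy }
  (isInternal_comap_of_injective 𝒜 hf hrange).gradedAlgebra

/-- The grading pushed forward along a surjective algebra homomorphism with homogeneous kernel. -/
noncomputable abbrev gradedAlgebraMap (f : A →ₐ[R] B) (hf : Function.Surjective f)
    (hker : SetLike.IsHomogeneous 𝒜 (LinearMap.ker f.toLinearMap)) :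
    GradedAlgebra fun i ↦ (𝒜 i).map f.toLinearMap :=
  have : SetLike.GradedMonoid fun i ↦ (𝒜 i).map f.toLinearMap :=
    { one_mem := ⟨1, SetLike.GradedOne.one_mem, map_one f⟩
      mul_mem := by
        rintro _ _ _ _ ⟨x, hx, rfl⟩ ⟨y, hy, rfl⟩
        exact ⟨x * y, SetLike.GradedMul.mul_mem hx hy, map_mul f x y⟩ }
  (isInternal_map_of_surjective 𝒜 hf hker).gradedAlgebra

variable {κ : Type*} [DecidableEq κ] [AddMonoid κ] (ℬ : κ → Submodule R A) [GradedAlgebra ℬ]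

/-- The bigrading with pieces `𝒜 i ⊓ ℬ j` of an algebra carrying two compatible gradings. -/
noncomputable abbrev gradedAlgebraInf (h : ∀ i, 𝒜 i ≤ ⨆ j, 𝒜 i ⊓ ℬ j) :
    GradedAlgebra fun p : ι × κ ↦ 𝒜 p.1 ⊓ ℬ p.2 :=
  have : SetLike.GradedMonoid fun p : ι × κ ↦ 𝒜 p.1 ⊓ ℬ p.2 :=
    { one_mem := ⟨SetLike.GradedOne.one_mem, SetLike.GradedOne.one_mem⟩
      mul_mem := fun _ _ _ _ hx hy ↦
        ⟨SetLike.GradedMul.mul_mem hx.1 hy.1, SetLike.GradedMul.mul_mem hx.2 hy.2⟩ }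
  (isInternal_inf 𝒜 ℬ h).gradedAlgebra

end GradedAlgebra

section Truncation

variable {k A : Type*} [CommRing k] [Ring A] [Algebra k A] (𝓑 : ℤ × ℤ → Submodule k A)

/-- The nonnegative truncation of a bigraded algebra by the weight `j - i` of the piece
`𝓑 (i, j)`, cut down to `N` in weight zero: the span of the `𝓑 (i, j)` with `i < j` and of the
`𝓑 (i, i) ⊓ N`. The canonical truncation of a dg-algebra is obtained for `N = ker d`. -/
def weightTruncation (N : Submodule k A) : Submodule k A :=
  Submodule.span k {x | ∃ p, x ∈ 𝓑 p ∧ (p.1 < p.2 ∨ p.1 = p.2 ∧ x ∈ N)}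

variable {𝓑} {N N' N'' : Submodule k A}

lemma weightTruncation_mono (h : N ≤ N') : weightTruncation 𝓑 N ≤ weightTruncation 𝓑 N' :=
  Submodule.span_mono fun _ ⟨p, hp, hx⟩ ↦ ⟨p, hp, hx.imp_right (And.imp_right (@h _))⟩

lemma mem_weightTruncation_of_lt {p : ℤ × ℤ} (hp : p.1 < p.2) {x : A} (hx : x ∈ 𝓑 p) :
    x ∈ weightTruncation 𝓑 N :=
  Submodule.subset_span ⟨p, hx, .inl hp⟩

lemma mem_weightTruncation_of_eq {p : ℤ × ℤ} (hp : p.1 = p.2) {x : A} (hx : x ∈ 𝓑 p)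
    (hxN : x ∈ N) : x ∈ weightTruncation 𝓑 N :=
  Submodule.subset_span ⟨p, hx, .inr ⟨hp, hxN⟩⟩

lemma isHomogeneous_weightTruncation {ι : Type*} [DecidableEq ι] {𝒜 : ι → Submodule k A}
    [Decomposition 𝒜] (h : ∀ p, ∃ i, 𝓑 p ≤ 𝒜 i) :
    SetLike.IsHomogeneous 𝒜 (weightTruncation 𝓑 N) :=
  isHomogeneous_span 𝒜 fun _ ⟨p, hx, _⟩ ↦ (h p).imp fun _ hi ↦ hi hx

variable [GradedAlgebra 𝓑]

lemma mul_mem_weightTruncation (h : ∀ x ∈ N, ∀ y ∈ N', x * y ∈ N'') {x y : A}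
    (hx : x ∈ weightTruncation 𝓑 N) (hy : y ∈ weightTruncation 𝓑 N') :
    x * y ∈ weightTruncation 𝓑 N'' := by
  have hxy := Submodule.mul_mem_mul hx hy
  rw [weightTruncation, weightTruncation, Submodule.span_mul_span] at hxy
  refine Submodule.span_mono ?_ hxy
  rintro _ ⟨x, ⟨p, hxp, hx⟩, y, ⟨q, hyq, hy⟩, rfl⟩
  refine ⟨p + q, SetLike.mul_mem_graded hxp hyq, ?_⟩
  simp only [Prod.fst_add, Prod.snd_add]
  rcases hx, hy with ⟨hp | ⟨hp, hxN⟩, hq | ⟨hq, hyN⟩⟩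
  · exact .inl (by lia)
  · exact .inl (by lia)
  · exact .inl (by lia)
  · exact .inr ⟨by lia, h x hxN y hyN⟩

lemma decompose_eq_zero_of_mem_weightTruncation {x : A} (hx : x ∈ weightTruncation 𝓑 N)
    {p : ℤ × ℤ} (hp : p.2 < p.1) : (decompose 𝓑 x p : A) = 0 := by
  suffices weightTruncation 𝓑 N ≤ LinearMap.ker (GradedAlgebra.proj 𝓑 p) from this hx
  refine Submodule.span_le.mpr fun y ⟨q, hyq, hy⟩ ↦ decompose_of_mem_ne 𝓑 hyq ?_
  rintro rfl
  lia

lemma decompose_mem_of_mem_weightTruncation {x : A} (hx : x ∈ weightTruncation 𝓑 N)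
    {p : ℤ × ℤ} (hp : p.1 = p.2) : (decompose 𝓑 x p : A) ∈ N := by
  suffices weightTruncation 𝓑 N ≤ N.comap (GradedAlgebra.proj 𝓑 p) from this hx
  refine Submodule.span_le.mpr fun y ⟨q, hyq, hy⟩ ↦ ?_
  rw [SetLike.mem_coe, Submodule.mem_comap, GradedAlgebra.proj_apply]
  obtain rfl | hqp := eq_or_ne q p
  · rw [decompose_of_mem_same 𝓑 hyq]
    exact (hy.resolve_left hp.not_lt).2
  · rw [decompose_of_mem_ne 𝓑 hyq hqp]
    exact N.zero_mem

end Truncation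

lemma DGAHom.decompose_toAlgHom {k : Type} [Field k] {E F : DGA k} (f : DGAHom E F)
    (x : E.carrier) (i : ℤ) :
    (decompose F.grading (f.toAlgHom x) i : F.carrier) =
      f.toAlgHom (decompose E.grading x i) :=
  coe_decompose_apply_of_mapsTo E.grading F.grading (f := f.toAlgHom.toLinearMap)
    Function.injective_id f.map_grading x i

namespace DGA

variable {k : Type} [Field k] (E : DGA k)

lemma d_one : E.d 1 = 0 := by
  simpa using E.leibniz 0 1 1 SetLike.GradedOne.one_mem

lemma decompose_d (x : E.carrier) (i : ℤ) :
    (decompose E.grading (E.d x) (i + 1) : E.carrier) = E.d (decompose E.grading x i) :=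
  coe_decompose_apply_of_mapsTo E.grading E.grading (add_left_injective 1) E.d_degree x i

lemma d_mul_of_d_eq_zero {y : E.carrier} (hy : E.d y = 0) (x : E.carrier) :
    E.d (x * y) = E.d x * y := by
  induction x using Decomposition.inductionOn E.grading with
  | zero => simp
  | add x x' hx hx' => simp [add_mul, hx, hx']
  | @homogeneous i x => rw [E.leibniz i x y x.2, hy, mul_zero, smul_zero, add_zero]

lemma mul_mem_range_d_of_left {x y : E.carrier} (hx : x ∈ LinearMap.range E.d)
    (hy : E.d y = 0) : x * y ∈ LinearMap.range E.d := by
  obtain ⟨z, rfl⟩ := hx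
  exact ⟨z * y, E.d_mul_of_d_eq_zero hy z⟩

lemma mul_mem_range_d_of_right {x y : E.carrier} (hx : E.d x = 0)
    (hy : y ∈ LinearMap.range E.d) : x * y ∈ LinearMap.range E.d := by
  obtain ⟨z, rfl⟩ := hy
  suffices x ∈ (LinearMap.range E.d).comap (LinearMap.mulRight k (E.d z)) from this
  refine mem_of_forall_decompose_mem E.grading fun i ↦ ?_
  have hxi : E.d (decompose E.grading x i) = 0 := by simp [← decompose_d, hx]
  refine ⟨((-1 : k) ^ i)⁻¹ • (decompose E.grading x i * z), ?_⟩
  rw [map_smul, E.leibniz i _ z (SetLike.coe_mem _), hxi, zero_mul, zero_add,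
    inv_smul_smul₀ (zpow_ne_zero i (neg_ne_zero.mpr one_ne_zero)), LinearMap.mulRight_apply]

lemma range_d_le_ker_d : LinearMap.range E.d ≤ LinearMap.ker E.d := by
  rintro _ ⟨x, rfl⟩
  exact E.d_squared x

section Subalgebra

variable (S : Subalgebra k E.carrier) (hS : SetLike.IsHomogeneous E.grading S)
  (hdS : ∀ x ∈ S, E.d x ∈ S)

/-- The dg-subalgebra of `E` carried by a homogeneous subalgebra stable under the differential. -/
noncomputable def ofSubalgebra : DGA k where
  carrier := S
  grading i := (E.grading i).comap S.val.toLinearMap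
  graded := gradedAlgebraComap E.grading S.val Subtype.val_injective fun i x hx ↦ by
    obtain ⟨y, rfl⟩ := hx
    exact ⟨⟨_, hS i y.2⟩, rfl⟩
  d := E.d.restrict (p := Subalgebra.toSubmodule S) (q := Subalgebra.toSubmodule S) hdS
  d_degree i x hx := E.d_degree i x hx
  d_squared x := Subtype.ext (E.d_squared x)
  leibniz i x y hx := Subtype.ext (E.leibniz i x y hx)

/-- The inclusion of a dg-subalgebra. -/
noncomputable def ofSubalgebraHom : DGAHom (E.ofSubalgebra S hS hdS) E where
  toAlgHom := S.val
  map_grading _ _ hx := hx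
  comm_d _ := rfl

lemma isQuasiIso_ofSubalgebraHom_of_acyclic_quotient
    (h : ∀ y, E.d y ∈ S → ∃ z, y - E.d z ∈ S) :
    (E.ofSubalgebraHom S hS hdS).IsQuasiIso := by
  constructor
  · intro y hy
    obtain ⟨z, hz⟩ := h y (hy ▸ S.zero_mem)
    refine ⟨⟨_, hz⟩, Subtype.ext ?_, z, (sub_add_cancel y (E.d z)).symm⟩
    change E.d (y - E.d z) = 0
    rw [map_sub, hy, E.d_squared, sub_zero]
  · rintro x - ⟨y, hxy : (x : S).1 = E.d y⟩
    obtain ⟨z, hz⟩ := h y (hxy ▸ x.2)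
    refine ⟨⟨_, hz⟩, Subtype.ext ?_⟩
    change x.1 = E.d (y - E.d z)
    rw [map_sub, E.d_squared, sub_zero, hxy]

end Subalgebra

section Quotient

variable (I : Ideal E.carrier) [I.IsTwoSided] (hI : SetLike.IsHomogeneous E.grading I)
  (hdI : ∀ x ∈ I, E.d x ∈ I)

/-- The quotient of `E` by a homogeneous two-sided ideal stable under the differential. -/
noncomputable def quotient : DGA k where
  carrier := E.carrier ⧸ I
  grading i := (E.grading i).map (Ideal.Quotient.mkₐ k I).toLinearMap
  graded := gradedAlgebraMap E.grading (Ideal.Quotient.mkₐ k I) Ideal.Quotient.mk_surjective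
    fun i x hx ↦ Ideal.Quotient.eq_zero_iff_mem.mpr (hI i (Ideal.Quotient.eq_zero_iff_mem.mp hx))
  d := (I.restrictScalars k).mapQ (I.restrictScalars k) E.d hdI
  d_degree := by
    rintro i _ ⟨x, hx, rfl⟩
    exact ⟨E.d x, E.d_degree i x hx, rfl⟩
  d_squared := by
    rintro ⟨x⟩
    exact congrArg (Ideal.Quotient.mkₐ k I) (E.d_squared x)
  leibniz := by
    rintro i _ ⟨y⟩ ⟨x, hx, rfl⟩
    exact congrArg (Ideal.Quotient.mkₐ k I) (E.leibniz i x y hx)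

/-- The projection onto a quotient dg-algebra. -/
noncomputable def quotientHom : DGAHom E (E.quotient I hI hdI) where
  toAlgHom := Ideal.Quotient.mkₐ k I
  map_grading _ x hx := ⟨x, hx, rfl⟩
  comm_d _ := rfl

lemma quotient_d_eq_zero (h : ∀ x, E.d x ∈ I) : (E.quotient I hI hdI).d = 0 := by
  ext ⟨x⟩
  exact Ideal.Quotient.eq_zero_iff_mem.mpr (h x)

lemma isQuasiIso_quotientHom_of_acyclic (h : ∀ x ∈ I, E.d x = 0 → ∃ w ∈ I, x = E.d w) :
    (E.quotientHom I hI hdI).IsQuasiIso := by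
  constructor
  · rintro ⟨x⟩ hx
    obtain ⟨w, hw, hxw⟩ := h (E.d x) (Ideal.Quotient.eq_zero_iff_mem.mp hx) (E.d_squared x)
    refine ⟨x - w, by rw [map_sub, hxw, sub_self], 0, ?_⟩
    rw [map_zero, add_zero]
    refine Ideal.Quotient.eq.mpr ?_
    rwa [sub_sub_cancel]
  · rintro x hx ⟨⟨z⟩, hz⟩
    have hxz : x - E.d z ∈ I := Ideal.Quotient.eq.mp hz
    obtain ⟨w, -, hw⟩ := h _ hxz (by rw [map_sub, hx, E.d_squared, sub_zero])
    exact ⟨w + z, by rw [map_add, ← hw, sub_add_cancel]⟩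

end Quotient

/-- A bigrading of the underlying algebra of `E` is compatible with the dg-structure if it refines
the grading of `E` and `d` has bidegree `(1, 0)`. -/
structure IsBigrading (𝓑 : ℤ × ℤ → Submodule k E.carrier) : Prop where
  le_grading : ∀ p, 𝓑 p ≤ E.grading p.1
  d_mem : ∀ p, ∀ x ∈ 𝓑 p, E.d x ∈ 𝓑 (p + (1, 0))

/-- The cohomology of `E` is concentrated on the diagonal of the bigrading: off the diagonal, every
bihomogeneous cocycle is a coboundary. -/
def HasDiagonalCohomology (𝓑 : ℤ × ℤ → Submodule k E.carrier) : Prop :=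
  ∀ p : ℤ × ℤ, p.1 ≠ p.2 → ∀ x ∈ 𝓑 p, E.d x = 0 → x ∈ LinearMap.range E.d

variable {E} {𝓑 : ℤ × ℤ → Submodule k E.carrier}

namespace IsBigrading

lemma d_mem_weightTruncation (h : E.IsBigrading 𝓑) {x : E.carrier}
    (hx : x ∈ weightTruncation 𝓑 (LinearMap.ker E.d)) :
    E.d x ∈ weightTruncation 𝓑 (LinearMap.range E.d) := by
  suffices weightTruncation 𝓑 (LinearMap.ker E.d) ≤
      (weightTruncation 𝓑 (LinearMap.range E.d)).comap E.d from this hx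
  refine Submodule.span_le.mpr fun y ⟨p, hyp, hy⟩ ↦ ?_
  rw [SetLike.mem_coe, Submodule.mem_comap]
  rcases hy with hp | ⟨-, hy⟩
  · rcases (show p.1 + 1 ≤ p.2 from hp).lt_or_eq with hp' | hp'
    · exact mem_weightTruncation_of_lt (p := p + (1, 0)) (by simpa using hp') (h.d_mem p y hyp)
    · exact mem_weightTruncation_of_eq (p := p + (1, 0)) (by simpa using hp') (h.d_mem p y hyp)
        ⟨y, rfl⟩
  · rw [LinearMap.mem_ker.mp hy]
    exact zero_mem _

variable [GradedAlgebra 𝓑]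

lemma decompose_d (h : E.IsBigrading 𝓑) (x : E.carrier) (p : ℤ × ℤ) :
    (decompose 𝓑 (E.d x) (p + (1, 0)) : E.carrier) = E.d (decompose 𝓑 x p) :=
  coe_decompose_apply_of_mapsTo 𝓑 𝓑 (add_left_injective (1, 0)) h.d_mem x p

lemma exists_mem_d_eq (h : E.IsBigrading 𝓑) {p : ℤ × ℤ} {x : E.carrier} (hx : x ∈ 𝓑 p)
    (hxd : x ∈ LinearMap.range E.d) : ∃ z ∈ 𝓑 (p - (1, 0)), E.d z = x := by
  obtain ⟨z, rfl⟩ := hxd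
  refine ⟨_, SetLike.coe_mem (decompose 𝓑 z (p - (1, 0))), ?_⟩
  rw [← h.decompose_d, sub_add_cancel, decompose_of_mem_same 𝓑 hx]

lemma exists_sub_d_mem_weightTruncation (h : E.IsBigrading 𝓑)
    (hconc : E.HasDiagonalCohomology 𝓑) {y : E.carrier}
    (hy : E.d y ∈ weightTruncation 𝓑 (LinearMap.ker E.d)) :
    ∃ z, y - E.d z ∈ weightTruncation 𝓑 (LinearMap.ker E.d) := by
  have hd_zero (p : ℤ × ℤ) (hp : p.2 ≤ p.1) : E.d (decompose 𝓑 y p) = 0 := by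
    rw [← h.decompose_d]
    exact decompose_eq_zero_of_mem_weightTruncation hy (by simpa using Int.lt_add_one_of_le hp)
  suffices y ∈ weightTruncation 𝓑 (LinearMap.ker E.d) ⊔ LinearMap.range E.d by
    obtain ⟨x, hx, _, ⟨z, rfl⟩, rfl⟩ := Submodule.mem_sup.mp this
    exact ⟨z, by rwa [add_sub_cancel_right]⟩
  refine mem_of_forall_decompose_mem 𝓑 fun p ↦ ?_
  have hyp : (decompose 𝓑 y p : E.carrier) ∈ 𝓑 p := SetLike.coe_mem _
  rcases lt_trichotomy p.1 p.2 with hp | hp | hp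
  · exact Submodule.mem_sup_left (mem_weightTruncation_of_lt hp hyp)
  · exact Submodule.mem_sup_left (mem_weightTruncation_of_eq hp hyp (hd_zero p hp.ge))
  · exact Submodule.mem_sup_right (hconc p hp.ne' _ hyp (hd_zero p hp.le))

lemma exists_mem_weightTruncation_eq_d (h : E.IsBigrading 𝓑)
    (hconc : E.HasDiagonalCohomology 𝓑) {x : E.carrier}
    (hx : x ∈ weightTruncation 𝓑 (LinearMap.range E.d)) (hdx : E.d x = 0) :
    ∃ w ∈ weightTruncation 𝓑 (LinearMap.range E.d), E.d w = x := by
  suffices x ∈ (weightTruncation 𝓑 (LinearMap.range E.d)).map E.d from this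
  refine mem_of_forall_decompose_mem 𝓑 fun p ↦ ?_
  obtain hp | hp := lt_or_ge p.2 p.1
  · rw [decompose_eq_zero_of_mem_weightTruncation hx hp]
    exact zero_mem _
  have hxp : (decompose 𝓑 x p : E.carrier) ∈ 𝓑 p := SetLike.coe_mem _
  have hxd : (decompose 𝓑 x p : E.carrier) ∈ LinearMap.range E.d := by
    by_cases hpp : p.1 = p.2
    · exact decompose_mem_of_mem_weightTruncation hx hpp
    · exact hconc p hpp _ hxp (by rw [← h.decompose_d, hdx, decompose_zero]; rfl)
  obtain ⟨z, hz, hzx⟩ := h.exists_mem_d_eq hxp hxd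
  refine ⟨z, mem_weightTruncation_of_lt (p := p - (1, 0)) ?_ hz, hzx⟩
  simpa using hp

end IsBigrading

variable (E 𝓑) [GradedAlgebra 𝓑]

/-- The subalgebra of `E` of elements of nonnegative weight whose weight-zero components are
cocycles. -/
def truncationSubalgebra : Subalgebra k E.carrier :=
  (weightTruncation 𝓑 (LinearMap.ker E.d)).toSubalgebra
    (mem_weightTruncation_of_eq rfl SetLike.GradedOne.one_mem E.d_one)
    fun _ _ ↦ mul_mem_weightTruncation fun x hx y hy ↦ by
      rw [LinearMap.mem_ker, E.d_mul_of_d_eq_zero hy, hx, zero_mul]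

variable {E 𝓑}

/-- The canonical truncation of `E` to nonnegative weights, as a dg-subalgebra of `E`. -/
noncomputable abbrev truncation (h : E.IsBigrading 𝓑) : DGA k :=
  E.ofSubalgebra (E.truncationSubalgebra 𝓑)
    (isHomogeneous_weightTruncation fun p ↦ ⟨p.1, h.le_grading p⟩)
    fun _ hx ↦ weightTruncation_mono E.range_d_le_ker_d (h.d_mem_weightTruncation hx)

/-- The inclusion of the canonical truncation. -/
noncomputable abbrev truncationHom (h : E.IsBigrading 𝓑) : DGAHom (truncation h) E :=
  E.ofSubalgebraHom _ _ _

/-- The ideal of the truncation of `E` of elements whose weight-zero components are coboundaries;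
the quotient by it is the weight-zero cohomology of `E`. -/
noncomputable def truncationIdeal (h : E.IsBigrading 𝓑) : Ideal (truncation h).carrier where
  __ := (weightTruncation 𝓑 (LinearMap.range E.d)).comap (truncationHom h).toAlgHom.toLinearMap
  smul_mem' c _ hx := mul_mem_weightTruncation
    (fun _ hx _ hy ↦ E.mul_mem_range_d_of_right hx hy) c.2 hx

instance (h : E.IsBigrading 𝓑) : (truncationIdeal h).IsTwoSided where
  mul_mem_of_left b ha := mul_mem_weightTruncation
    (fun _ hx _ hy ↦ E.mul_mem_range_d_of_left hx hy) ha b.2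

lemma isHomogeneous_truncationIdeal (h : E.IsBigrading 𝓑) :
    SetLike.IsHomogeneous (truncation h).grading (truncationIdeal h) := by
  intro i x hx
  change (truncationHom h).toAlgHom _ ∈ weightTruncation 𝓑 (LinearMap.range E.d)
  rw [← DGAHom.decompose_toAlgHom]
  exact isHomogeneous_weightTruncation (fun p ↦ ⟨p.1, h.le_grading p⟩) i hx

lemma d_mem_truncationIdeal (h : E.IsBigrading 𝓑) (x : (truncation h).carrier) :
    (truncation h).d x ∈ truncationIdeal h :=
  h.d_mem_weightTruncation x.2

lemma isQuasiIso_truncationHom (h : E.IsBigrading 𝓑) (hconc : E.HasDiagonalCohomology 𝓑) :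
    (truncationHom h).IsQuasiIso :=
  E.isQuasiIso_ofSubalgebraHom_of_acyclic_quotient _ _ _ fun _ hy ↦
    h.exists_sub_d_mem_weightTruncation hconc hy

lemma isQuasiIso_quotientHom_truncationIdeal (h : E.IsBigrading 𝓑)
    (hconc : E.HasDiagonalCohomology 𝓑) :
    ((truncation h).quotientHom (truncationIdeal h) (isHomogeneous_truncationIdeal h)
      fun x _ ↦ d_mem_truncationIdeal h x).IsQuasiIso := by
  refine isQuasiIso_quotientHom_of_acyclic _ _ _ _ fun x hx hdx ↦ ?_
  obtain ⟨w, hw, hwx⟩ := h.exists_mem_weightTruncation_eq_d hconc hx (congrArg Subtype.val hdx)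
  exact ⟨⟨w, weightTruncation_mono E.range_d_le_ker_d hw⟩, hw, Subtype.ext hwx.symm⟩

theorem IsBigrading.formal (h : E.IsBigrading 𝓑) (hconc : E.HasDiagonalCohomology 𝓑) :
    E.Formal :=
  ⟨_, quotient_d_eq_zero _ _ _ _ (d_mem_truncationIdeal h),
    .trans _ _ _ (.symm _ _ (.rel _ _ ⟨_, isQuasiIso_truncationHom h hconc⟩))
      (.rel _ _ ⟨_, isQuasiIso_quotientHom_truncationIdeal h hconc⟩)⟩

end DGA

theorem deligne_formality_criterion {k : Type} [Field k] (E : DGA k)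
    -- an additional ℤ-grading, respected by the multiplication (a second algebra grading) ...
    (aux : ℤ → Submodule k E.carrier) [GradedAlgebra aux]
    -- ... compatible with the original grading: Eⁱ = ⊕ⱼ E^{i,j} with E^{i,j} = Eⁱ ⊓ aux j ...
    (hcompat : ∀ i : ℤ, E.grading i = ⨆ j : ℤ, E.grading i ⊓ aux j)
    -- ... and respected by the differential:
    (hd : ∀ j : ℤ, ∀ x ∈ aux j, E.d x ∈ aux j)
    -- each Hⁱ(E) is concentrated in additional-grading degree i:
    (hconc : ∀ i j : ℤ, j ≠ i → ∀ x ∈ E.grading i ⊓ aux j, E.d x = 0 →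
      ∃ z : E.carrier, x = E.d z) :
    E.Formal := by
  let _ := gradedAlgebraInf E.grading aux fun i ↦ (hcompat i).le
  have hbigrading : E.IsBigrading fun p ↦ E.grading p.1 ⊓ aux p.2 :=
    { le_grading := fun p ↦ inf_le_left
      d_mem := fun p x hx ↦ by simpa using ⟨E.d_degree p.1 x hx.1, hd p.2 x hx.2⟩ }
  refine hbigrading.formal fun p hp x hx hdx ↦ ?_
  obtain ⟨z, hz⟩ := hconc p.1 p.2 hp.symm x hx hdx
  exact ⟨z, hz.symm⟩
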